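/- The real Gamma function satisfies Γ(2/15) = (√φ* · √(√15 − ψ*) / (2 · 3^(7/20) · 5^(1/3))) · Γ(1/3)⁻¹ · Γ(2/5) · Γ(1/15), where φ* = 5 − √5 and ψ* = √(5 − 2√5). -/

import Mathlib

open Real

/-!
Applying Gauss's multiplication formula to `k = 3` and `k = 5`, and replacing each factor at an
argument exceeding `1 / 2` by Euler's reflection formula, gives

* `Γ(1/15) Γ(2/5) = 2 · 3^(3/10) · sin(4π/15) · Γ(4/15) Γ(1/5)`,
* `Γ(2/15) Γ(7/15) = 2 · 3^(1/10) · sin(π/5) · Γ(1/5) Γ(2/5)`,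
* `Γ(1/15) Γ(4/15) Γ(7/15) = 4 · 5^(1/6) · sin(2π/15) sin(π/3) · Γ(2/15) Γ(1/3)²`.

Eliminating `Γ(1/5)`, `Γ(4/15)` and `Γ(7/15)` leaves the square of the claimed identity, with a
trigonometric constant. That constant becomes `φ* (√15 - ψ*)` because `φ* = 8 sin²(π/5)`,
`ψ* = tan(π/5)` and `√15 - ψ* = sin(2π/5) / (sin(2π/15) sin(4π/15))`.
-/

section SineProduct

open Finset

theorem prod_range_sin_succ_mul_pi_div (n : ℕ) :
    ∏ j ∈ range n, sin ((j + 1) * π / (n + 1)) = (n + 1) / 2 ^ n := by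
  have norm_one_sub_root (j : ℕ) (hj : j ∈ range n) :
      ‖1 - Complex.exp (2 * π * Complex.I / ↑(n + 1)) ^ (j + 1)‖ =
        2 * sin ((j + 1) * π / (n + 1)) := by
    have hsin : 0 ≤ sin ((j + 1) * π / (n + 1)) := by
      have hjn : (j : ℝ) < n := by exact_mod_cast mem_range.1 hj
      refine sin_nonneg_of_nonneg_of_le_pi (by positivity) ?_
      rw [div_le_iff₀ (by positivity)]
      nlinarith [pi_pos]
    calc ‖1 - Complex.exp (2 * π * Complex.I / ↑(n + 1)) ^ (j + 1)‖
        = ‖Complex.exp (Complex.I * ↑(2 * ((j + 1) * π / (n + 1)))) - 1‖ := by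
          rw [norm_sub_rev, ← Complex.exp_nat_mul]
          congr 3
          push_cast
          ring
      _ = 2 * sin ((j + 1) * π / (n + 1)) := by
          rw [Complex.norm_exp_I_mul_ofReal_sub_one, mul_div_cancel_left₀ _ two_ne_zero,
            norm_of_nonneg (by positivity)]
  have hprod := congrArg (‖·‖)
    (Complex.isPrimitiveRoot_exp (n + 1) n.succ_ne_zero).prod_one_sub_pow_eq_order
  simp only [norm_prod, prod_congr rfl norm_one_sub_root, prod_mul_distrib, prod_const,
    card_range] at hprod
  rw [eq_div_iff (by positivity), mul_comm, hprod]
  norm_cast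

end SineProduct

section GaussMultiplication

open Finset

theorem Gamma_mul_Gamma_one_sub_mul_sin {s : ℝ} (hs : 0 < s) (hs' : s < 1) :
    Gamma s * Gamma (1 - s) * sin (π * s) = π := by
  have hsin : 0 < sin (π * s) :=
    sin_pos_of_pos_of_lt_pi (by positivity) (mul_lt_of_lt_one_right pi_pos hs')
  rw [Gamma_mul_Gamma_one_sub, div_mul_cancel₀ _ hsin.ne']

theorem prod_range_Gamma_succ_div (n : ℕ) :
    ∏ j ∈ range n, Gamma ((j + 1) / (n + 1)) = √((2 * π) ^ n / (n + 1)) := by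
  have reflect (j : ℕ) (hj : j ∈ range n) :
      Gamma ((j + 1) / (n + 1)) * Gamma ((↑(n - 1 - j) + 1) / (n + 1)) =
        π / sin ((j + 1) * π / (n + 1)) := by
    have hj' := mem_range.1 hj
    have hsub : (↑(n - 1 - j) + 1 : ℝ) / (n + 1) = 1 - (j + 1) / (n + 1) := by
      rw [Nat.sub_sub, Nat.cast_sub (by lia)]
      push_cast
      field
    rw [hsub, Gamma_mul_Gamma_one_sub, mul_div_assoc', mul_comm π]
  rw [← sqrt_mul_self (prod_nonneg fun j _ => by positivity)]
  congr 1
  calc (∏ j ∈ range n, Gamma ((j + 1) / (n + 1))) * ∏ j ∈ range n, Gamma ((j + 1) / (n + 1))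
      = ∏ j ∈ range n, π / sin ((j + 1) * π / (n + 1)) := by
        nth_rw 2 [← prod_range_reflect]
        rw [← prod_mul_distrib, prod_congr rfl reflect]
    _ = (2 * π) ^ n / (n + 1) := by
        rw [prod_div_distrib, prod_range_sin_succ_mul_pi_div, prod_const, card_range]
        field

theorem convexOn_log_Gamma_add_div {a b : ℝ} (ha : 0 ≤ a) (hb : 0 < b) :
    ConvexOn ℝ (Set.Ioi 0) fun s => log (Gamma ((s + a) / b)) := by
  have hline (s : ℝ) : AffineMap.lineMap (a / b) ((1 + a) / b) s = (s + a) / b := by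
    rw [AffineMap.lineMap_apply_ring']
    ring
  have h := convexOn_log_Gamma.comp_affineMap (AffineMap.lineMap (a / b) ((1 + a) / b))
  refine (h.subset (fun s (hs : 0 < s) => ?_) (convex_Ioi 0)).congr fun s _ => ?_
  · rw [Set.mem_preimage, hline]
    exact div_pos (by positivity) hb
  · simp only [Function.comp_apply, hline]

theorem convexOn_finset_sum {ι 𝕜 E β : Type*} [Semiring 𝕜] [PartialOrder 𝕜] [AddCommMonoid E]
    [AddCommMonoid β] [PartialOrder β] [IsOrderedAddMonoid β] [SMul 𝕜 E] [Module 𝕜 β]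
    {s : Set E} (hs : Convex 𝕜 s) (t : Finset ι) {f : ι → E → β}
    (hf : ∀ i ∈ t, ConvexOn 𝕜 s (f i)) : ConvexOn 𝕜 s (∑ i ∈ t, f i) :=
  sum_induction f (ConvexOn 𝕜 s) (fun _ _ => ConvexOn.add) (convexOn_const 0 hs) hf

/-- The product side of Gauss's multiplication formula as a function of `s`, normalised to take
the value `1` at `s = 1`, so that the Bohr-Mollerup theorem identifies it with `Gamma`. -/
noncomputable def gaussProduct (k : ℕ) (s : ℝ) : ℝ :=
  k ^ (s - 1) * (∏ j ∈ range k, Gamma ((s + j) / k)) / ∏ j ∈ range k, Gamma ((1 + j) / k)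

variable {k : ℕ} {s : ℝ}

theorem prod_Gamma_add_one_div (hk : k ≠ 0) (hs : 0 < s) :
    ∏ j ∈ range k, Gamma ((s + 1 + j) / k) = s / k * ∏ j ∈ range k, Gamma ((s + j) / k) := by
  have hshift (j : ℕ) : (s + 1 + j) / k = (s + ↑(j + 1)) / k := by
    push_cast
    ring
  have hlast : Gamma ((s + k) / k) = s / k * Gamma ((s + ↑(0 : ℕ)) / k) := by
    rw [add_div, div_self (by positivity), Gamma_add_one (by positivity), Nat.cast_zero, add_zero]
  refine mul_right_cancel₀ (by positivity : Gamma ((s + ↑(0 : ℕ)) / k) ≠ 0) ?_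
  simp only [hshift]
  rw [← prod_range_succ' (fun j : ℕ => Gamma ((s + j) / k)), prod_range_succ, hlast]
  ring

theorem gaussProduct_pos (hk : k ≠ 0) (hs : 0 < s) : 0 < gaussProduct k s := by
  unfold gaussProduct
  positivity

theorem gaussProduct_one (hk : k ≠ 0) : gaussProduct k 1 = 1 := by
  rw [gaussProduct, sub_self, rpow_zero, one_mul, div_self (by positivity)]

theorem gaussProduct_add_one (hk : k ≠ 0) (hs : 0 < s) :
    gaussProduct k (s + 1) = s * gaussProduct k s := by
  rw [gaussProduct, gaussProduct, prod_Gamma_add_one_div hk hs, add_sub_right_comm,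
    rpow_add (by positivity), rpow_one]
  field

theorem convexOn_log_gaussProduct (hk : k ≠ 0) :
    ConvexOn ℝ (Set.Ioi 0) (log ∘ gaussProduct k) := by
  have hlinear : ConvexOn ℝ (Set.Ioi 0) (LinearMap.mulRight ℝ (log k)) :=
    LinearMap.convexOn _ (convex_Ioi 0)
  have hsum := convexOn_finset_sum (convex_Ioi 0) (range k) fun j _ =>
    convexOn_log_Gamma_add_div j.cast_nonneg (Nat.cast_pos.2 hk.pos)
  refine ((hlinear.add hsum).add_const
    (-log k - log (∏ j ∈ range k, Gamma ((1 + j) / k)))).congr fun s hs => ?_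
  have hs : 0 < s := hs
  rw [Function.comp_apply, gaussProduct, log_div (by positivity) (by positivity),
    log_mul (by positivity) (by positivity), log_rpow (by positivity),
    log_prod (f := fun j : ℕ => Gamma ((s + j) / k)) fun j _ => by positivity]
  simp only [Pi.add_apply, Finset.sum_apply, LinearMap.mulRight_apply]
  ring

theorem gaussProduct_eq_Gamma (hk : k ≠ 0) (hs : 0 < s) : gaussProduct k s = Gamma s :=
  eq_Gamma_of_log_convex (convexOn_log_gaussProduct hk) (gaussProduct_add_one hk)
    (gaussProduct_pos hk) (gaussProduct_one hk) hs

theorem prod_Gamma_one_add_div (hk : k ≠ 0) :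
    ∏ j ∈ range k, Gamma ((1 + j) / k) = (2 * π) ^ (((k : ℝ) - 1) / 2) * k ^ (-1 / 2 : ℝ) := by
  obtain ⟨n, rfl⟩ := Nat.exists_eq_succ_of_ne_zero hk
  have hn : (0 : ℝ) < n + 1 := by positivity
  simp only [Nat.succ_eq_add_one, Nat.cast_add_one, add_comm (1 : ℝ)]
  rw [prod_range_succ, div_self hn.ne', Gamma_one, mul_one, prod_range_Gamma_succ_div,
    sqrt_eq_rpow, div_rpow (by positivity) hn.le, ← rpow_natCast, ← rpow_mul (by positivity),
    div_eq_mul_inv, ← rpow_neg hn.le]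
  ring_nf

theorem prod_Gamma_add_div (hk : k ≠ 0) (hs : 0 < s) :
    ∏ j ∈ range k, Gamma (s + j / k) =
      (2 * π) ^ (((k : ℝ) - 1) / 2) * k ^ (1 / 2 - k * s) * Gamma (k * s) := by
  have hk' : (0 : ℝ) < k := by positivity
  have harg (j : ℕ) : s + j / k = (k * s + j) / k := by field
  have hexp : (k : ℝ) ^ (1 / 2 - k * s) * k ^ (k * s - 1) = k ^ (-1 / 2 : ℝ) := by
    rw [← rpow_add hk']
    ring_nf
  simp only [harg]
  rw [← gaussProduct_eq_Gamma hk (by positivity), gaussProduct, mul_div_assoc',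
    eq_div_iff (by positivity), prod_Gamma_one_add_div hk, ← hexp]
  ring

theorem Gamma_mul_Gamma_add_third (hs : 0 < s) (hs' : s < 1 / 3) :
    Gamma s * Gamma (s + 1 / 3) =
      2 * 3 ^ (1 / 2 - 3 * s) * sin (π * (1 / 3 - s)) * Gamma (1 / 3 - s) * Gamma (3 * s) := by
  have gauss : Gamma s * Gamma (s + 1 / 3) * Gamma (s + 2 / 3) =
      2 * π * 3 ^ (1 / 2 - 3 * s) * Gamma (3 * s) := by
    have h := prod_Gamma_add_div three_ne_zero hs
    norm_num [prod_range_succ] at h ⊢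
    exact h
  have reflect := Gamma_mul_Gamma_one_sub_mul_sin (s := 1 / 3 - s) (by linarith) (by linarith)
  rw [show 1 - (1 / 3 - s) = s + 2 / 3 by ring] at reflect
  refine mul_right_cancel₀ (by positivity : Gamma (s + 2 / 3) ≠ 0) ?_
  linear_combination gauss - 2 * 3 ^ (1 / 2 - 3 * s) * Gamma (3 * s) * reflect

theorem Gamma_mul_Gamma_add_fifth_mul_Gamma_add_two_fifths (hs : 0 < s) (hs' : s < 1 / 5) :
    Gamma s * Gamma (s + 1 / 5) * Gamma (s + 2 / 5) =
      4 * 5 ^ (1 / 2 - 5 * s) * (sin (π * (1 / 5 - s)) * sin (π * (2 / 5 - s))) *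
        (Gamma (1 / 5 - s) * Gamma (2 / 5 - s) * Gamma (5 * s)) := by
  have gauss : Gamma s * Gamma (s + 1 / 5) * Gamma (s + 2 / 5) *
      (Gamma (s + 3 / 5) * Gamma (s + 4 / 5)) =
        (2 * π) ^ 2 * 5 ^ (1 / 2 - 5 * s) * Gamma (5 * s) := by
    have h := prod_Gamma_add_div (k := 5) (by norm_num) hs
    norm_num [prod_range_succ] at h ⊢
    rw [← h, mul_assoc (_ * _ * _)]
  have reflect₁ := Gamma_mul_Gamma_one_sub_mul_sin (s := 1 / 5 - s) (by linarith) (by linarith)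
  have reflect₂ := Gamma_mul_Gamma_one_sub_mul_sin (s := 2 / 5 - s) (by linarith) (by linarith)
  rw [show 1 - (1 / 5 - s) = s + 4 / 5 by ring] at reflect₁
  rw [show 1 - (2 / 5 - s) = s + 3 / 5 by ring] at reflect₂
  have reflect := congrArg₂ (· * ·) reflect₁ reflect₂
  refine mul_right_cancel₀ (by positivity : Gamma (s + 3 / 5) * Gamma (s + 4 / 5) ≠ 0) ?_
  linear_combination gauss - 4 * 5 ^ (1 / 2 - 5 * s) * Gamma (5 * s) * reflect

end GaussMultiplication

section Trigonometry

theorem sin_sq_pi_div_five : sin (π / 5) ^ 2 = (5 - √5) / 8 := by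
  rw [sin_sq, cos_pi_div_five]
  linear_combination (-1 / 16 : ℝ) * sq_sqrt (show (0 : ℝ) ≤ 5 by norm_num)

theorem tan_pi_div_five : tan (π / 5) = √(5 - 2 * √5) := by
  have h5 : √5 ^ 2 = 5 := sq_sqrt (by norm_num)
  have htan : 0 ≤ tan (π / 5) :=
    tan_nonneg_of_nonneg_of_le_pi_div_two (by positivity) (by linarith [pi_pos])
  rw [← sqrt_sq htan, tan_eq_sin_div_cos, div_pow, sin_sq_pi_div_five, cos_pi_div_five]
  congr 1
  rw [div_eq_iff (by positivity)]
  linear_combination (1 / 8 * √5 - 1 / 16) * h5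

theorem sin_two_pi_div_five : sin (2 * π / 5) = sin (π / 5) * (1 + √5) / 2 := by
  rw [mul_div_assoc, sin_two_mul, cos_pi_div_five]
  ring

theorem cos_two_pi_div_five : cos (2 * π / 5) = (√5 - 1) / 4 := by
  rw [mul_div_assoc, cos_two_mul, cos_pi_div_five]
  linear_combination (1 / 8 : ℝ) * sq_sqrt (show (0 : ℝ) ≤ 5 by norm_num)

theorem cos_two_pi_div_fifteen :
    cos (2 * π / 15) = (1 + √5) / 8 + √3 / 2 * sin (π / 5) := by
  rw [show 2 * π / 15 = π / 3 - π / 5 by ring, cos_sub, cos_pi_div_three, sin_pi_div_three,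
    cos_pi_div_five]
  ring

theorem sin_two_pi_div_fifteen_mul_sin_four_pi_div_fifteen :
    sin (2 * π / 15) * sin (4 * π / 15) = (3 - √5) / 16 + √3 / 4 * sin (π / 5) := by
  have h := two_mul_sin_mul_sin (4 * π / 15) (2 * π / 15)
  rw [show 4 * π / 15 - 2 * π / 15 = 2 * π / 15 by ring,
    show 4 * π / 15 + 2 * π / 15 = 2 * π / 5 by ring, cos_two_pi_div_fifteen,
    cos_two_pi_div_five] at h
  linear_combination h / 2

theorem sqrt_fifteen_sub_tan_pi_div_five_mul_sin_mul_sin :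
    (√15 - √(5 - 2 * √5)) * (sin (2 * π / 15) * sin (4 * π / 15)) = sin (2 * π / 5) := by
  have h3 : √3 ^ 2 = 3 := sq_sqrt (by norm_num)
  have h5 : √5 ^ 2 = 5 := sq_sqrt (by norm_num)
  have h15 : √15 = √3 * √5 := by rw [← sqrt_mul (by norm_num)]; norm_num
  have htan : √(5 - 2 * √5) = sin (π / 5) * (√5 - 1) := by
    rw [← tan_pi_div_five, tan_eq_sin_div_cos, cos_pi_div_five, div_eq_iff (by positivity)]
    linear_combination (-sin (π / 5) / 4) * h5
  rw [sin_two_pi_div_fifteen_mul_sin_four_pi_div_fifteen, sin_two_pi_div_five, h15, htan]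
  linear_combination √5 * sin (π / 5) / 4 * h3 + (sin (π / 5) / 16 - √3 / 32) * h5 +
    √3 * (1 - √5) / 4 * sin_sq_pi_div_five

theorem sin_two_pi_div_fifteen_mul_sin_four_pi_div_fifteen_pos :
    0 < sin (2 * π / 15) * sin (4 * π / 15) :=
  mul_pos (sin_pos_of_pos_of_lt_pi (by positivity) (by linarith [pi_pos]))
    (sin_pos_of_pos_of_lt_pi (by positivity) (by linarith [pi_pos]))

theorem sqrt_fifteen_sub_pos : 0 < √15 - √(5 - 2 * √5) := by
  have hsin : 0 < sin (2 * π / 5) :=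
    sin_pos_of_pos_of_lt_pi (by positivity) (by linarith [pi_pos])
  rw [← sqrt_fifteen_sub_tan_pi_div_five_mul_sin_mul_sin] at hsin
  exact (pos_iff_pos_of_mul_pos hsin).2 sin_two_pi_div_fifteen_mul_sin_four_pi_div_fifteen_pos

end Trigonometry

theorem sq_Gamma_third_mul_Gamma_two_fifteenths_mul_sin_mul_sin :
    (Gamma (1 / 3) * Gamma (2 / 15)) ^ 2 * (2 * 3 ^ (7 / 10 : ℝ) * 5 ^ (1 / 6 : ℝ)) *
        (sin (2 * π / 15) * sin (4 * π / 15)) =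
      (Gamma (2 / 5) * Gamma (1 / 15)) ^ 2 * sin (π / 5) := by
  have h₁ : Gamma (1 / 15) * Gamma (2 / 5) =
      2 * 3 ^ (3 / 10 : ℝ) * sin (4 * π / 15) * Gamma (4 / 15) * Gamma (1 / 5) := by
    convert Gamma_mul_Gamma_add_third (s := 1 / 15) (by norm_num) (by norm_num) using 4 <;> ring_nf
  have h₂ : Gamma (2 / 15) * Gamma (7 / 15) =
      2 * 3 ^ (1 / 10 : ℝ) * sin (π / 5) * Gamma (1 / 5) * Gamma (2 / 5) := by
    convert Gamma_mul_Gamma_add_third (s := 2 / 15) (by norm_num) (by norm_num) using 4 <;> ring_nf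
  have h₃ : Gamma (1 / 15) * Gamma (4 / 15) * Gamma (7 / 15) =
      4 * 5 ^ (1 / 6 : ℝ) * (sin (2 * π / 15) * (√3 / 2)) *
        (Gamma (2 / 15) * Gamma (1 / 3) * Gamma (1 / 3)) := by
    rw [← sin_pi_div_three]
    convert Gamma_mul_Gamma_add_fifth_mul_Gamma_add_two_fifths (s := 1 / 15)
      (by norm_num) (by norm_num) using 4 <;> ring_nf
  have h3 : (3 : ℝ) ^ (7 / 10 : ℝ) * 3 ^ (1 / 10 : ℝ) = 3 ^ (3 / 10 : ℝ) * √3 := by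
    rw [sqrt_eq_rpow, ← rpow_add three_pos, ← rpow_add three_pos]
    norm_num
  refine mul_right_cancel₀ (by positivity : 2 * (3 : ℝ) ^ (1 / 10 : ℝ) * Gamma (1 / 5) ≠ 0) ?_
  symm
  calc (Gamma (2 / 5) * Gamma (1 / 15)) ^ 2 * sin (π / 5) * (2 * 3 ^ (1 / 10 : ℝ) * Gamma (1 / 5))
      = Gamma (1 / 15) * (Gamma (1 / 15) * Gamma (2 / 5)) *
          (2 * 3 ^ (1 / 10 : ℝ) * sin (π / 5) * Gamma (1 / 5) * Gamma (2 / 5)) := by ring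
    _ = Gamma (1 / 15) *
          (2 * 3 ^ (3 / 10 : ℝ) * sin (4 * π / 15) * Gamma (4 / 15) * Gamma (1 / 5)) *
          (Gamma (2 / 15) * Gamma (7 / 15)) := by rw [h₁, h₂]
    _ = 2 * 3 ^ (3 / 10 : ℝ) * sin (4 * π / 15) * Gamma (1 / 5) * Gamma (2 / 15) *
          (Gamma (1 / 15) * Gamma (4 / 15) * Gamma (7 / 15)) := by ring
    _ = 4 * 5 ^ (1 / 6 : ℝ) * Gamma (1 / 5) * (sin (2 * π / 15) * sin (4 * π / 15)) *
          (Gamma (1 / 3) * Gamma (2 / 15)) ^ 2 * (3 ^ (3 / 10 : ℝ) * √3) := by rw [h₃]; ring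
    _ = _ := by rw [← h3]; ring

theorem sq_Gamma_third_mul_Gamma_two_fifteenths :
    (Gamma (1 / 3) * Gamma (2 / 15)) ^ 2 * (2 * 3 ^ (7 / 20 : ℝ) * 5 ^ (1 / 3 : ℝ)) ^ 2 =
      (5 - √5) * (√15 - √(5 - 2 * √5)) * (Gamma (2 / 5) * Gamma (1 / 15)) ^ 2 := by
  have hK : (2 * 3 ^ (7 / 20 : ℝ) * 5 ^ (1 / 3 : ℝ) : ℝ) ^ 2 =
      2 * √5 * (2 * 3 ^ (7 / 10 : ℝ) * 5 ^ (1 / 6 : ℝ)) := by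
    have h3 : ((3 : ℝ) ^ (7 / 20 : ℝ)) ^ 2 = 3 ^ (7 / 10 : ℝ) := by
      rw [← rpow_mul_natCast (by norm_num)]
      norm_num
    have h5 : ((5 : ℝ) ^ (1 / 3 : ℝ)) ^ 2 = √5 * 5 ^ (1 / 6 : ℝ) := by
      rw [← rpow_mul_natCast (by norm_num), sqrt_eq_rpow, ← rpow_add (by norm_num)]
      norm_num
    rw [mul_pow, mul_pow, h3, h5]
    ring
  have hsin : (5 - √5) * sin (2 * π / 5) = 2 * √5 * sin (π / 5) := by
    rw [sin_two_pi_div_five]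
    linear_combination (-sin (π / 5) / 2) * sq_sqrt (show (0 : ℝ) ≤ 5 by norm_num)
  rw [← sqrt_fifteen_sub_tan_pi_div_five_mul_sin_mul_sin] at hsin
  refine mul_right_cancel₀ sin_two_pi_div_fifteen_mul_sin_four_pi_div_fifteen_pos.ne' ?_
  rw [hK]
  linear_combination 2 * √5 * sq_Gamma_third_mul_Gamma_two_fifteenths_mul_sin_mul_sin -
    (Gamma (2 / 5) * Gamma (1 / 15)) ^ 2 * hsin

theorem gamma_two_fifteenths :
    Real.Gamma (2/15) =
      (Real.sqrt (5 - Real.sqrt 5) * Real.sqrt (Real.sqrt 15 - Real.sqrt (5 - 2 * Real.sqrt 5)) /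
          (2 * (3:ℝ) ^ ((7:ℝ)/20) * (5:ℝ) ^ ((1:ℝ)/3))) *
        (Real.Gamma (1/3))⁻¹ * Real.Gamma (2/5) * Real.Gamma (1/15) := by
  have h5 : 0 ≤ 5 - √5 := sub_nonneg.2 (sqrt_le_self_iff.2 (by norm_num))
  have key : Gamma (1 / 3) * Gamma (2 / 15) * (2 * 3 ^ (7 / 20 : ℝ) * 5 ^ (1 / 3 : ℝ)) =
      √(5 - √5) * √(√15 - √(5 - 2 * √5)) * (Gamma (2 / 5) * Gamma (1 / 15)) := by
    refine (pow_left_inj₀ (by positivity) (by positivity) two_ne_zero).1 ?_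
    rw [mul_pow, sq_Gamma_third_mul_Gamma_two_fifteenths, mul_pow (√_ * √_), mul_pow √_,
      sq_sqrt h5, sq_sqrt sqrt_fifteen_sub_pos.le]
  have hΓ : Gamma (1 / 3) ≠ 0 := by positivity
  field_simp
  linear_combination key
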